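/- Let v ∈ BT_n be such that every irreducible uniform cover inequality holds strictly at v (i.e. Σ_i v_{Y_i} > k v_Y whenever Y₁,…,Y_l is an irreducible k-uniform cover of Y ⊆ [n] other than the trivial cover {Y}). Then there exists Λ > 0 such that for every λ ≥ Λ, the vector λv lies in ψ_n; that is, there is a compact body T ⊂ ℝ^n with log|T_A| = λ v_A for all nonempty A ⊆ [n]. -/

import Mathlib

open MeasureTheory

/-- The projection of a set `T ⊆ ℝ^n` onto the coordinate subspace spanned by
the axes in `A`, viewed as a subset of `↥A → ℝ`. -/
def proj {n : ℕ} (A : Finset (Fin n)) (T : Set (Fin n → ℝ)) : Set (↥A → ℝ) :=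
  (fun (f : Fin n → ℝ) (i : ↥A) => f i.1) '' T

/-- The constructible region `ψ_n`. -/
def psi (n : ℕ) : Set ({A : Finset (Fin n) // A.Nonempty} → ℝ) :=
  {x | ∃ T : Set (Fin n → ℝ), IsCompact T ∧
    ∀ A : {A : Finset (Fin n) // A.Nonempty}, x A = Real.log (volume (proj A.1 T)).toReal}

/-- The polyhedral cone `BT_n` of all uniform cover inequalities. -/
def BT (n : ℕ) : Set ({A : Finset (Fin n) // A.Nonempty} → ℝ) :=
  {x | ∀ (Y : Finset (Fin n)) (hY : Y.Nonempty) (k l : ℕ)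
    (Z : Fin l → Finset (Fin n)) (hZ : ∀ i, (Z i).Nonempty),
    (∀ i, Z i ⊆ Y) →
    (∀ j ∈ Y, (Finset.univ.filter fun i => j ∈ Z i).card = k) →
    (k : ℝ) * x ⟨Y, hY⟩ ≤ ∑ i, x ⟨Z i, hZ i⟩}

/-!
Given `Y`, strictness of the uniform cover inequalities extends from irreducible covers to all
covers not containing `Y`, since these decompose into irreducible ones. A uniform cover of `Y` by
proper subsets is the same as a natural number relation between the indicator vectors of these
subsets and that of `Y`, so integral linear programming duality yields `x : Fin n → ℝ` with
`∑ j ∈ Y, x j = v Y` and `∑ j ∈ A, x j < v A` for every nonempty `A ⊂ Y`.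

The box supported on the axes in `Y` with side lengths `exp (lam * x j)` has the right projection to
`Y` itself, and its projections to smaller `A` fall short of `exp (lam * v A)` by a factor
exponential in `lam`. Adding such boxes from large `Y` to small `Y`, each beyond all the previous
ones and shrunk along one axis to offset their total contribution to the volume on `Y`, therefore
realizes `lam • v` once `lam` is large. Volumes already adjusted do not change afterwards, as later
boxes project to null sets there.
-/

section Elimination

variable {σ M : Type*} [AddMonoid M]

lemma nsmul_mem_of_ne_zero {S : Type*} [SetLike S M] [AddMemClass S M] {s : S} {x : M}
    (hx : x ∈ s) {n : ℕ} (hn : n ≠ 0) : n • x ∈ s := by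
  induction n, Nat.one_le_iff_ne_zero.2 hn using Nat.le_induction with
  | base => simpa only [one_nsmul]
  | succ n hle ih => simpa only [succ_nsmul] using add_mem (ih (by lia)) hx

/-- One step of Fourier–Motzkin elimination. A row `(a, b)` stands for the strict inequality
`∑ j, a j * x j < b`; rows with coefficients of opposite signs at `j` are combined so that the
variable `x j` cancels. -/
def eliminate (j : σ) (F : Set ((σ → ℤ) × M)) : Set ((σ → ℤ) × M) :=
  {r ∈ F | r.1 j = 0} ∪
    Set.image2 (fun p q => (q.1 j).natAbs • p + (p.1 j).natAbs • q)
      {p ∈ F | 0 < p.1 j} {q ∈ F | q.1 j < 0}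

variable {j : σ} {F : Set ((σ → ℤ) × M)}

lemma finite_eliminate (hF : F.Finite) : (eliminate j F).Finite :=
  (hF.sep _).union ((hF.sep _).image2 _ (hF.sep _))

lemma eliminate_subset_closure : eliminate j F ⊆ AddSubsemigroup.closure F := by
  rintro r (hr | ⟨p, hp, q, hq, rfl⟩)
  · exact AddSubsemigroup.subset_closure hr.1
  · exact add_mem
      (nsmul_mem_of_ne_zero (AddSubsemigroup.subset_closure hp.1) (Int.natAbs_ne_zero.2 hq.2.ne))
      (nsmul_mem_of_ne_zero (AddSubsemigroup.subset_closure hq.1) (Int.natAbs_ne_zero.2 hp.2.ne'))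

lemma apply_eq_zero_of_mem_closure_eliminate {r : (σ → ℤ) × M}
    (hr : r ∈ AddSubsemigroup.closure (eliminate j F)) : r.1 j = 0 := by
  induction hr using AddSubsemigroup.closure_induction with
  | mem r hr =>
    rcases hr with hr | ⟨p, hp, q, hq, rfl⟩
    · exact hr.2
    · change (q.1 j).natAbs • p.1 j + (p.1 j).natAbs • q.1 j = 0
      simp only [nsmul_eq_mul, Int.natCast_natAbs, abs_of_neg hq.2, abs_of_pos hp.2]
      ring
  | add r s _ _ hr hs => rw [Prod.fst_add, Pi.add_apply, hr, hs, add_zero]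

end Elimination

section Motzkin

variable {σ 𝕜 : Type*}

/-- The slack `b - ∑ j ∈ s, a j * x j` at the point `x` of the inequality encoded by the row
`(a, b)`, as an additive function of the row. -/
def slack [Ring 𝕜] (s : Finset σ) (x : σ → 𝕜) : (σ → ℤ) × 𝕜 →+ 𝕜 where
  toFun r := r.2 - ∑ j ∈ s, r.1 j * x j
  map_zero' := by simp
  map_add' p q := by
    simp only [Prod.fst_add, Prod.snd_add, Pi.add_apply, Int.cast_add, add_mul,
      Finset.sum_add_distrib, add_sub_add_comm]

lemma slack_apply [Ring 𝕜] (s : Finset σ) (x : σ → 𝕜) (r : (σ → ℤ) × 𝕜) :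
    slack s x r = r.2 - ∑ j ∈ s, r.1 j * x j :=
  rfl

lemma slack_insert_update [Ring 𝕜] [DecidableEq σ] {s : Finset σ} {j : σ} (hj : j ∉ s)
    (x : σ → 𝕜) (t : 𝕜) (r : (σ → ℤ) × 𝕜) :
    slack (insert j s) (Function.update x j t) r = slack s x r - r.1 j * t := by
  have hsum : ∑ i ∈ s, r.1 i * Function.update x j t i = ∑ i ∈ s, r.1 i * x i :=
    Finset.sum_congr rfl fun i hi => by rw [Function.update_of_ne (ne_of_mem_of_not_mem hi hj)]
  rw [slack_apply, slack_apply, Finset.sum_insert hj, Function.update_self, hsum]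
  abel

variable [Field 𝕜] [LinearOrder 𝕜] [IsStrictOrderedRing 𝕜]

lemma exists_forall_mul_lt {ι : Type*} {F : Set ι} (hF : F.Finite) {a b : ι → 𝕜}
    (hzero : ∀ i ∈ F, a i = 0 → 0 < b i)
    (hpair : ∀ p ∈ F, ∀ q ∈ F, 0 < a p → a q < 0 → 0 < -a q * b p + a p * b q) :
    ∃ t, ∀ i ∈ F, a i * t < b i := by
  classical
  obtain ⟨t, hlower, hupper⟩ := Order.exists_between_finsets
    ({q ∈ hF.toFinset | a q < 0}.image fun q => b q / a q)
    ({p ∈ hF.toFinset | 0 < a p}.image fun p => b p / a p) <| by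
      simp only [Finset.forall_mem_image, Finset.mem_filter, Set.Finite.mem_toFinset]
      rintro q ⟨hqF, hq⟩ p ⟨hpF, hp⟩
      rw [lt_div_iff₀ hp, div_mul_eq_mul_div, div_lt_iff_of_neg hq]
      linarith [hpair p hpF q hqF hp hq]
  simp only [Finset.forall_mem_image, Finset.mem_filter, Set.Finite.mem_toFinset, and_imp]
    at hlower hupper
  refine ⟨t, fun i hi => ?_⟩
  rcases lt_trichotomy (a i) 0 with hneg | heq | hpos
  · simpa only [mul_comm] using (div_lt_iff_of_neg hneg).1 (hlower hi hneg)
  · simpa only [heq, zero_mul] using hzero i hi heq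
  · simpa only [mul_comm] using (lt_div_iff₀ hpos).1 (hupper hi hpos)

/-- Motzkin's transposition theorem for strict inequalities. As the coefficients are integers,
natural number multipliers suffice, which is why `AddSubsemigroup.closure` appears. -/
theorem exists_forall_slack_pos {F : Set ((σ → ℤ) × 𝕜)} (hF : F.Finite) (s : Finset σ)
    (h : ∀ r ∈ AddSubsemigroup.closure F, (∀ j ∈ s, r.1 j = 0) → 0 < r.2) :
    ∃ x : σ → 𝕜, ∀ r ∈ F, 0 < slack s x r := by
  classical
  induction s using Finset.induction_on generalizing F with
  | empty =>
    exact ⟨0, fun r hr => by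
      simpa [slack_apply] using h r (AddSubsemigroup.subset_closure hr) (by simp)⟩
  | insert j s hj ih =>
    obtain ⟨x, hx⟩ := ih (finite_eliminate hF) fun r hr hrs =>
      h r (AddSubsemigroup.closure_le.2 eliminate_subset_closure hr)
        ((Finset.forall_mem_insert ..).2 ⟨apply_eq_zero_of_mem_closure_eliminate hr, hrs⟩)
    obtain ⟨t, ht⟩ := exists_forall_mul_lt hF (a := fun r => (r.1 j : 𝕜)) (b := slack s x)
      (fun r hr hrj => hx r (.inl ⟨hr, Int.cast_eq_zero.1 hrj⟩)) fun p hp q hq hpj hqj => by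
        have hpq := hx _ (.inr ⟨p, ⟨hp, Int.cast_pos.1 hpj⟩, q, ⟨hq, Int.cast_lt_zero.1 hqj⟩, rfl⟩)
        rw [map_add, map_nsmul, map_nsmul] at hpq
        simpa only [nsmul_eq_mul, Nat.cast_natAbs, Int.cast_abs, abs_of_neg hqj,
          abs_of_pos hpj] using hpq
    refine ⟨Function.update x j t, fun r hr => ?_⟩
    rw [slack_insert_update hj]
    exact sub_pos.2 (ht r hr)

end Motzkin

/-- The nonempty finite subsets of `α`, which index the coordinates of log-projection vectors. -/
abbrev NonemptyFinset (α : Type*) := {A : Finset α // A.Nonempty}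

section UniformCover

variable {α : Type*} [DecidableEq α]

/-- `M` is a `k`-uniform cover of `Y`. Covers are multisets, so that a set may be repeated; the
empty multiset is the `0`-uniform cover. -/
def IsUniformCover (Y : NonemptyFinset α) (k : ℕ) (M : Multiset (NonemptyFinset α)) : Prop :=
  (∀ A ∈ M, A ≤ Y) ∧ ∀ j ∈ Y.1, M.countP (j ∈ ·.1) = k

/-- `M` is a `k`-uniform cover of `Y` that does not split off a smaller uniform cover. -/
def IsIrreducibleCover (Y : NonemptyFinset α) (k : ℕ) (M : Multiset (NonemptyFinset α)) : Prop :=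
  IsUniformCover Y k M ∧ ∀ M' < M, M' ≠ 0 → ∀ k', ¬ IsUniformCover Y k' M'

variable {Y : NonemptyFinset α} {k m : ℕ} {M N : Multiset (NonemptyFinset α)}

lemma isUniformCover_map {ι : Type*} {S : Finset ι} {Z : ι → NonemptyFinset α} :
    IsUniformCover Y k (S.val.map Z) ↔
      (∀ i ∈ S, Z i ≤ Y) ∧ ∀ j ∈ Y.1, (S.filter fun i => j ∈ (Z i).1).card = k := by
  simp only [IsUniformCover, Multiset.mem_map, Finset.mem_val, forall_exists_index, and_imp,
    forall_apply_eq_imp_iff₂, Multiset.countP_map]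
  rfl

lemma exists_fin_map_eq {β : Type*} (M : Multiset β) :
    ∃ (l : ℕ) (Z : Fin l → β), Finset.univ.val.map Z = M :=
  ⟨_, M.toList.get, by rw [Fin.univ_val_map, List.ofFn_get, Multiset.coe_toList]⟩

lemma IsIrreducibleCover.not_forall_card_filter_eq {ι : Type*} [Fintype ι]
    {Z : ι → NonemptyFinset α} (h : IsIrreducibleCover Y k (Finset.univ.val.map Z)) {S : Finset ι}
    (hne : S.Nonempty) (huniv : S ≠ Finset.univ) (m : ℕ) :
    ¬ ∀ j ∈ Y.1, (S.filter fun i => j ∈ (Z i).1).card = m := fun hcard =>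
  h.2 (S.val.map Z)
    (Multiset.map_lt_map (Finset.val_lt_iff.2 (Finset.ssubset_univ_iff.2 huniv)))
    (by simpa using hne.ne_empty) m
    (isUniformCover_map.2 ⟨fun i _ => (isUniformCover_map.1 h.1).1 i (Finset.mem_univ i), hcard⟩)

namespace IsUniformCover

lemma exists_of_add_left (hM : IsUniformCover Y m M) (hMN : IsUniformCover Y k (M + N)) :
    ∃ l, m + l = k ∧ IsUniformCover Y l N := by
  have hcount : ∀ j ∈ Y.1, m + N.countP (j ∈ ·.1) = k := fun j hj => by
    rw [← hM.2 j hj, ← Multiset.countP_add, hMN.2 j hj]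
  obtain ⟨i, hi⟩ := Y.2
  exact ⟨_, hcount i hi, fun A hA => hMN.1 A (Multiset.mem_add.2 (.inr hA)),
    fun j hj => Nat.add_left_cancel ((hcount j hj).trans (hcount i hi).symm)⟩

lemma lt_sum_of_irreducible {R : Type*} [Semiring R] [PartialOrder R]
    [IsOrderedCancelAddMonoid R]
    {v : NonemptyFinset α → R}
    (hv : ∀ (k : ℕ) (M : Multiset (NonemptyFinset α)), IsIrreducibleCover Y k M → Y ∉ M → M ≠ 0 →
      k * v Y < (M.map v).sum)
    (hM : IsUniformCover Y k M) (hne : M ≠ 0) (hY : Y ∉ M) :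
    k * v Y < (M.map v).sum := by
  induction M using Multiset.strongInductionOn generalizing k with
  | ih M ih =>
    by_cases hirr : IsIrreducibleCover Y k M
    · exact hv k M hirr hY hne
    simp only [IsIrreducibleCover, hM, true_and, not_forall, not_not] at hirr
    obtain ⟨M', hlt, hne', k', hM'⟩ := hirr
    obtain ⟨N, rfl⟩ := exists_add_of_le hlt.le
    obtain ⟨l, rfl, hN⟩ := hM'.exists_of_add_left hM
    rw [Multiset.mem_add, not_or] at hY
    have hN0 : N ≠ 0 := by
      rintro rfl
      exact hlt.ne (add_zero M').symm
    have hlt' : N < M' + N := lt_add_of_pos_left N (pos_iff_ne_zero.2 hne')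
    rw [Nat.cast_add, add_mul, Multiset.map_add, Multiset.sum_add]
    exact add_lt_add (ih M' hlt hM' hne' hY.1) (ih N hlt' hN hN0 hY.2)

end IsUniformCover

variable {𝕜 : Type*}

/-- The row encoding the inequality `∑ j ∈ A, x j < v A`. -/
def coverRow (v : NonemptyFinset α → 𝕜) (A : NonemptyFinset α) : (α → ℤ) × 𝕜 :=
  (fun j => if j ∈ A.1 then 1 else 0, v A)

lemma fst_sum_coverRow [AddCommMonoid 𝕜] (v : NonemptyFinset α → 𝕜)
    (M : Multiset (NonemptyFinset α)) (j : α) :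
    (M.map (coverRow v)).sum.1 j = M.countP (j ∈ ·.1) := by
  induction M using Multiset.induction_on with
  | empty => rfl
  | cons A M ih =>
    rw [Multiset.map_cons, Multiset.sum_cons, Prod.fst_add, Pi.add_apply, ih, Multiset.countP_cons,
      Nat.cast_add, add_comm, Nat.cast_ite, Nat.cast_one, Nat.cast_zero, coverRow]

lemma snd_sum_coverRow [AddCommMonoid 𝕜] (v : NonemptyFinset α → 𝕜)
    (M : Multiset (NonemptyFinset α)) :
    (M.map (coverRow v)).sum.2 = (M.map v).sum := by
  rw [← AddMonoidHom.coe_snd, map_multiset_sum, Multiset.map_map]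
  rfl

/-- The rows of the system `v Y < ∑ j ∈ Y, x j` and `∑ j ∈ A, x j < v A` for `A < Y`. -/
def coreRows [AddGroup 𝕜] (v : NonemptyFinset α → 𝕜) (Y : NonemptyFinset α) :
    Set ((α → ℤ) × 𝕜) :=
  insert (-coverRow v Y) (coverRow v '' Set.Iio Y)

lemma finite_coreRows [AddGroup 𝕜] (v : NonemptyFinset α → 𝕜) (Y : NonemptyFinset α) :
    (coreRows v Y).Finite :=
  ((Set.finite_Iio Y).image _).insert _

lemma exists_of_mem_closure_coreRows [AddCommGroup 𝕜] {v : NonemptyFinset α → 𝕜}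
    {r : (α → ℤ) × 𝕜} (hr : r ∈ AddSubsemigroup.closure (coreRows v Y)) :
    ∃ (k : ℕ) (M : Multiset (NonemptyFinset α)), (∀ A ∈ M, A < Y) ∧ (k ≠ 0 ∨ M ≠ 0) ∧
      r = (M.map (coverRow v)).sum - k • coverRow v Y := by
  induction hr using AddSubsemigroup.closure_induction with
  | mem r hr =>
    rcases hr with rfl | ⟨A, hA, rfl⟩
    · exact ⟨1, 0, by simp⟩
    · exact ⟨0, {A}, by simpa using hA⟩
  | add r s _ _ hr hs =>
    obtain ⟨k, M, hM, hne, rfl⟩ := hr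
    obtain ⟨l, N, hN, -, rfl⟩ := hs
    refine ⟨k + l, M + N, fun A hA => ?_, hne.imp (by lia) (by simp_all), ?_⟩
    · exact (Multiset.mem_add.1 hA).elim (hM A) (hN A)
    · rw [Multiset.map_add, Multiset.sum_add, add_nsmul]
      abel

variable [Field 𝕜] [LinearOrder 𝕜] [IsStrictOrderedRing 𝕜] {v : NonemptyFinset α → 𝕜}

lemma exists_lt_sum_and_sum_lt
    (hv : ∀ (k : ℕ) (M : Multiset (NonemptyFinset α)), IsUniformCover Y k M → M ≠ 0 → Y ∉ M →
      k * v Y < (M.map v).sum) :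
    ∃ x : α → 𝕜, v Y < ∑ j ∈ Y.1, x j ∧ ∀ A < Y, ∑ j ∈ A.1, x j < v A := by
  obtain ⟨x, hx⟩ := exists_forall_slack_pos (finite_coreRows v Y) Y.1 fun r hr hrY => by
    obtain ⟨k, M, hM, hne, rfl⟩ := exists_of_mem_closure_coreRows hr
    have hcover : IsUniformCover Y k M := by
      refine ⟨fun A hA => (hM A hA).le, fun j hj => ?_⟩
      have hj0 := hrY j hj
      simp only [Prod.fst_sub, Pi.sub_apply, fst_sum_coverRow, Prod.smul_fst,
        Pi.smul_apply, coverRow, if_pos hj] at hj0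
      simpa [sub_eq_zero] using hj0
    have hM0 : M ≠ 0 := by
      rintro rfl
      obtain ⟨j, hj⟩ := Y.2
      exact hne.elim (· (hcover.2 j hj).symm) (· rfl)
    have := hv k M hcover hM0 fun hY => (hM Y hY).false
    simpa [snd_sum_coverRow, coverRow] using this
  have hslack : ∀ A ≤ Y, slack Y.1 x (coverRow v A) = v A - ∑ j ∈ A.1, x j := by
    intro A hA
    have : Y.1 ∩ A.1 = A.1 := Finset.inter_eq_right.2 hA
    simp [slack_apply, coverRow, this]
  refine ⟨x, ?_, fun A hA => ?_⟩
  · have := hx _ (Set.mem_insert _ _)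
    rw [map_neg, hslack Y le_rfl] at this
    linarith
  · have := hx _ (Set.mem_insert_of_mem _ (Set.mem_image_of_mem _ hA))
    rw [hslack A hA.le] at this
    linarith

theorem exists_sum_eq_and_sum_lt
    (hv : ∀ (k : ℕ) (M : Multiset (NonemptyFinset α)), IsUniformCover Y k M → M ≠ 0 → Y ∉ M →
      k * v Y < (M.map v).sum) :
    ∃ x : α → 𝕜, ∑ j ∈ Y.1, x j = v Y ∧ ∀ A < Y, ∑ j ∈ A.1, x j < v A := by
  obtain ⟨x, hxY, hxA⟩ := exists_lt_sum_and_sum_lt hv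
  obtain ⟨i, hi⟩ := Y.2
  set δ := ∑ j ∈ Y.1, x j - v Y
  have hδ : 0 ≤ Pi.single (M := fun _ => 𝕜) i δ := Pi.single_nonneg.2 (sub_nonneg.2 hxY.le)
  refine ⟨x - Pi.single i δ, ?_, fun A hA => (Finset.sum_le_sum fun j _ => ?_).trans_lt (hxA A hA)⟩
  · simp [δ, hi]
  · exact sub_le_self _ (hδ j)

end UniformCover

section Projection

variable {n : ℕ} {A Y : Finset (Fin n)} {S T : Set (Fin n → ℝ)}

lemma proj_union (A : Finset (Fin n)) (S T : Set (Fin n → ℝ)) :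
    proj A (S ∪ T) = proj A S ∪ proj A T :=
  Set.image_union ..

lemma isCompact_proj (A : Finset (Fin n)) (hT : IsCompact T) : IsCompact (proj A T) :=
  hT.image (by fun_prop)

lemma disjoint_proj (hA : A.Nonempty) (h : ∀ f ∈ S, ∀ g ∈ T, ∀ j, f j < g j) :
    Disjoint (proj A S) (proj A T) := by
  obtain ⟨j, hj⟩ := hA
  rw [Set.disjoint_left]
  rintro _ ⟨f, hf, rfl⟩ ⟨g, hg, hfg⟩
  exact (h f hf g hg j).ne' (congrFun hfg ⟨j, hj⟩)

lemma proj_Icc (A : Finset (Fin n)) {a b : Fin n → ℝ} (hab : a ≤ b) :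
    proj A (Set.Icc a b) = Set.Icc (A.restrict a) (A.restrict b) := by
  refine Set.Subset.antisymm ?_ fun f hf => ?_
  · rintro _ ⟨f, hf, rfl⟩
    exact ⟨fun i => hf.1 i, fun i => hf.2 i⟩
  · refine ⟨Function.updateFinset a A f, ?_, Function.restrict_updateFinset a f⟩
    rw [← Set.pi_univ_Icc]
    intro j _
    by_cases hj : j ∈ A
    · simpa [Function.updateFinset, hj] using ⟨hf.1 ⟨j, hj⟩, hf.2 ⟨j, hj⟩⟩
    · simpa [Function.updateFinset, hj] using hab j

lemma volume_proj_Icc_add (A : Finset (Fin n)) (a : Fin n → ℝ) {s : Fin n → ℝ} (hs : 0 ≤ s) :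
    volume (proj A (Set.Icc a (a + s))) = ENNReal.ofReal (∏ j ∈ A, s j) := by
  rw [proj_Icc A (le_add_of_nonneg_right hs), Real.volume_Icc_pi,
    ENNReal.ofReal_prod_of_nonneg fun j _ => hs j,
    ← Finset.prod_coe_sort A fun j => ENNReal.ofReal (s j)]
  simp only [Finset.restrict, Pi.add_apply, add_sub_cancel_left]

lemma exists_le_prod_eq {ι 𝕜 : Type*} [Field 𝕜] [LinearOrder 𝕜] [IsStrictOrderedRing 𝕜]
    {Y : Finset ι} (hY : Y.Nonempty) {t : ι → 𝕜} (ht : ∀ j, 0 < t j) {m : 𝕜} (hm : 0 ≤ m)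
    (hmt : m ≤ ∏ j ∈ Y, t j) :
    ∃ s : ι → 𝕜, 0 ≤ s ∧ s ≤ t ∧ (∀ j ∉ Y, s j = 0) ∧ ∏ j ∈ Y, s j = m := by
  classical
  obtain ⟨i, hi⟩ := hY
  have hpos : 0 < ∏ j ∈ Y.erase i, t j := Finset.prod_pos fun j _ => ht j
  rw [← Finset.mul_prod_erase Y t hi] at hmt
  set c := m / ∏ j ∈ Y.erase i, t j
  have hc : c ≤ t i := (div_le_iff₀ hpos).2 hmt
  refine ⟨fun j => if j = i then c else if j ∈ Y then t j else 0, fun j => ?_, fun j => ?_,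
    fun j hj => ?_, ?_⟩
  · have := ht j
    simp only [Pi.zero_apply]
    split_ifs <;> positivity
  · dsimp only
    split_ifs with hji hjY
    · exact hji ▸ hc
    · exact le_rfl
    · exact (ht j).le
  · dsimp only
    rw [if_neg (ne_of_mem_of_not_mem hi hj).symm, if_neg hj]
  · have herase : ∏ j ∈ Y.erase i, (if j = i then c else if j ∈ Y then t j else 0) =
        ∏ j ∈ Y.erase i, t j := Finset.prod_congr rfl fun j hj => by
      rw [if_neg (Finset.ne_of_mem_erase hj), if_pos (Finset.mem_of_mem_erase hj)]
    rw [← Finset.mul_prod_erase Y _ hi, if_pos rfl, herase, div_mul_cancel₀ _ hpos.ne']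

lemma exists_isCompact_volume_proj_eq (hT : IsCompact T) (hY : Y.Nonempty) {t : Fin n → ℝ}
    (ht : ∀ j, 0 < t j) (hvol : volume (proj Y T) ≤ ENNReal.ofReal (∏ j ∈ Y, t j)) :
    ∃ T' : Set (Fin n → ℝ), IsCompact T' ∧
      volume (proj Y T') = ENNReal.ofReal (∏ j ∈ Y, t j) ∧
      (∀ A, volume (proj A T') ≤ volume (proj A T) + ENNReal.ofReal (∏ j ∈ A, t j)) ∧
      ∀ A, ¬ A ⊆ Y → volume (proj A T') = volume (proj A T) := by
  have hfin : volume (proj Y T) ≠ ⊤ := (isCompact_proj Y hT).measure_ne_top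
  obtain ⟨s, hs0, hst, hsY, hprod⟩ := exists_le_prod_eq hY ht
    (sub_nonneg.2 (ENNReal.toReal_le_of_le_ofReal (Finset.prod_nonneg fun j _ => (ht j).le) hvol))
    (sub_le_self _ ENNReal.toReal_nonneg)
  obtain ⟨b, hb⟩ := hT.isBounded.bddAbove
  have hbelow : ∀ f ∈ T, ∀ g ∈ Set.Icc (b + 1) (b + 1 + s), ∀ j, f j < g j := fun f hf g hg j =>
    (hb hf j).trans_lt ((lt_add_one (b j)).trans_le (hg.1 j))
  refine ⟨T ∪ Set.Icc (b + 1) (b + 1 + s), hT.union isCompact_Icc, ?_, fun A => ?_, fun A hA => ?_⟩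
  · rw [proj_union, measure_union (disjoint_proj hY hbelow)
      (isCompact_proj Y isCompact_Icc).measurableSet, volume_proj_Icc_add Y _ hs0, hprod,
      ENNReal.ofReal_sub _ ENNReal.toReal_nonneg, ENNReal.ofReal_toReal hfin,
      add_tsub_cancel_of_le hvol]
  · rw [proj_union]
    refine (measure_union_le _ _).trans (add_le_add_right ?_ _)
    rw [volume_proj_Icc_add A _ hs0]
    exact ENNReal.ofReal_le_ofReal (Finset.prod_le_prod (fun j _ => hs0 j) fun j _ => hst j)
  · obtain ⟨j, hjA, hjY⟩ := Finset.not_subset.1 hA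
    have hnull : volume (proj A (Set.Icc (b + 1) (b + 1 + s))) = 0 := by
      rw [volume_proj_Icc_add A _ hs0, Finset.prod_eq_zero hjA (hsY j hjY), ENNReal.ofReal_zero]
    rw [proj_union]
    exact le_antisymm ((measure_union_le _ _).trans_eq (by rw [hnull, add_zero]))
      (measure_mono Set.subset_union_left)

lemma natCast_mul_ofReal_exp_sub_le {m : ℕ} {η : ℝ} (hm : m ≤ Real.exp η) (a : ℝ) :
    m * ENNReal.ofReal (Real.exp (a - η)) ≤ ENNReal.ofReal (Real.exp a) := by
  rw [← ENNReal.ofReal_natCast, ← ENNReal.ofReal_mul (Nat.cast_nonneg _)]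
  apply ENNReal.ofReal_le_ofReal
  calc m * Real.exp (a - η) ≤ Real.exp η * Real.exp (a - η) := by gcongr
    _ = Real.exp a := by rw [← Real.exp_add, add_sub_cancel]

lemma exists_isCompact_volume_proj_eq_exp {w : NonemptyFinset (Fin n) → ℝ}
    {y : NonemptyFinset (Fin n) → Fin n → ℝ} {η : ℝ} (hy : ∀ Y, ∑ j ∈ Y.1, y Y j = w Y)
    (hgap : ∀ Y, ∀ A < Y, ∑ j ∈ A.1, y Y j ≤ w A - η)
    (hη : Fintype.card (NonemptyFinset (Fin n)) ≤ Real.exp η)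
    (F : Finset (NonemptyFinset (Fin n))) :
    ∃ T : Set (Fin n → ℝ), IsCompact T ∧
      (∀ A ∈ F, volume (proj A.1 T) = ENNReal.ofReal (Real.exp (w A))) ∧
      ∀ A ∉ F, volume (proj A.1 T) ≤ F.card * ENNReal.ofReal (Real.exp (w A - η)) := by
  refine Finset.induction_on_min_value (fun A : NonemptyFinset (Fin n) => A.1.card) F
    ⟨∅, isCompact_empty, by simp, by simp [proj]⟩ ?_
  rintro Y F hYF hmin ⟨T, hT, hmem, hnotMem⟩
  have hprod : ∀ A : Finset (Fin n),
      ∏ j ∈ A, Real.exp (y Y j) = Real.exp (∑ j ∈ A, y Y j) := fun A => (Real.exp_sum ..).symm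
  have hvol : volume (proj Y.1 T) ≤ ENNReal.ofReal (∏ j ∈ Y.1, Real.exp (y Y j)) := by
    rw [hprod, hy]
    exact (hnotMem Y hYF).trans <|
      natCast_mul_ofReal_exp_sub_le ((Nat.cast_le.2 F.card_le_univ).trans hη) (w Y)
  obtain ⟨T', hT', hY, hle, heq⟩ :=
    exists_isCompact_volume_proj_eq hT Y.2 (fun j => Real.exp_pos (y Y j)) hvol
  refine ⟨T', hT', fun A hA => ?_, fun A hA => ?_⟩
  · rcases Finset.mem_insert.1 hA with rfl | hAF
    · rw [hY, hprod, hy]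
    · rw [heq A.1 fun hAY => ?_, hmem A hAF]
      have hAY' : A = Y := Subtype.ext (Finset.eq_of_subset_of_card_le hAY (hmin A hAF))
      exact hYF (hAY' ▸ hAF)
  · rw [Finset.mem_insert, not_or] at hA
    rw [Finset.card_insert_of_notMem hYF, Nat.cast_succ, add_mul, one_mul]
    by_cases hAY : A.1 ⊆ Y.1
    · refine (hle A.1).trans (add_le_add (hnotMem A hA.2) (ENNReal.ofReal_le_ofReal ?_))
      rw [hprod]
      exact Real.exp_le_exp.2 (hgap Y A (lt_of_le_of_ne hAY hA.1))
    · rw [heq A.1 hAY]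
      exact (hnotMem A hA.2).trans le_self_add

lemma exists_forall_smul_mem_psi {v : NonemptyFinset (Fin n) → ℝ}
    {x : NonemptyFinset (Fin n) → Fin n → ℝ} (hx_eq : ∀ Y, ∑ j ∈ Y.1, x Y j = v Y)
    (hx_lt : ∀ Y, ∀ A < Y, ∑ j ∈ A.1, x Y j < v A) :
    ∃ Λ : ℝ, 0 < Λ ∧ ∀ lam : ℝ, Λ ≤ lam → lam • v ∈ psi n := by
  obtain ⟨ε, hε, hgap⟩ := Pi.exists_forall_pos_add_lt
    fun p : {p : NonemptyFinset (Fin n) × NonemptyFinset (Fin n) // p.2 < p.1} =>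
      hx_lt p.1.1 p.1.2 p.2
  set N : ℝ := ((Fintype.card (NonemptyFinset (Fin n)) : ℕ) : ℝ)
  refine ⟨(N + 1) / ε, by positivity, fun lam hlam => ?_⟩
  have hlarge : N + 1 ≤ lam * ε := (div_le_iff₀ hε).1 hlam
  have hlam0 : 0 ≤ lam := le_trans (by positivity) hlam
  obtain ⟨T, hT, hvol, -⟩ := exists_isCompact_volume_proj_eq_exp (w := lam • v)
    (y := fun Y j => lam * x Y j) (η := lam * ε)
    (fun Y => by rw [← Finset.mul_sum, hx_eq, Pi.smul_apply, smul_eq_mul])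
    (fun Y A hA => by
      rw [← Finset.mul_sum, Pi.smul_apply, smul_eq_mul, ← mul_sub]
      exact mul_le_mul_of_nonneg_left (le_sub_iff_add_le.2 (hgap ⟨(Y, A), hA⟩).le) hlam0)
    (by linarith [Real.add_one_le_exp (lam * ε)]) Finset.univ
  refine ⟨T, hT, fun A => ?_⟩
  rw [hvol A (Finset.mem_univ A), ENNReal.toReal_ofReal (Real.exp_pos _).le, Real.log_exp]

end Projection

/-- Lemma 12: if `v ∈ BT_n` and every irreducible uniform cover inequality
(other than the trivial cover `{Y}` of `Y`) is strict at `v`, then `λ v` is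
constructible for all sufficiently large `λ`.  A cover indexed by `Fin l` is
irreducible iff no proper nonempty index subset is itself a uniform cover. -/
theorem scaled_vector_constructible {n : ℕ}
    (v : {A : Finset (Fin n) // A.Nonempty} → ℝ) (hv : v ∈ BT n)
    (hstrict : ∀ (Y : Finset (Fin n)) (hYne : Y.Nonempty) (k l : ℕ)
      (Z : Fin l → Finset (Fin n)) (hZ : ∀ i, (Z i).Nonempty),
      (∀ i, Z i ⊆ Y) →
      (∀ j ∈ Y, (Finset.univ.filter fun i => j ∈ Z i).card = k) →
      (∀ (S : Finset (Fin l)) (k' : ℕ), S.Nonempty → S ≠ Finset.univ →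
        ¬ (∀ j ∈ Y, (S.filter fun i => j ∈ Z i).card = k')) →
      (¬ ∀ i, Z i = Y) →
      (k : ℝ) * v ⟨Y, hYne⟩ < ∑ i, v ⟨Z i, hZ i⟩) :
    ∃ Λ : ℝ, 0 < Λ ∧ ∀ lam : ℝ, Λ ≤ lam → lam • v ∈ psi n := by
  have hcover : ∀ (Y : NonemptyFinset (Fin n)) (k : ℕ) (M : Multiset (NonemptyFinset (Fin n))),
      IsIrreducibleCover Y k M → Y ∉ M → M ≠ 0 → k * v Y < (M.map v).sum := by
    intro Y k M hM hY hM0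
    obtain ⟨l, Z, rfl⟩ := exists_fin_map_eq M
    obtain ⟨hle, hcard⟩ := isUniformCover_map.1 hM.1
    obtain ⟨A, hA⟩ := Multiset.exists_mem_of_ne_zero hM0
    obtain ⟨i, hi, -⟩ := Multiset.mem_map.1 hA
    rw [Multiset.map_map]
    exact hstrict Y.1 Y.2 k l (fun i => (Z i).1) (fun i => (Z i).2)
      (fun i => hle i (Finset.mem_univ i)) hcard
      (fun S m hS hSuniv => hM.not_forall_card_filter_eq hS hSuniv m)
      fun hall => hY (Multiset.mem_map.2 ⟨i, hi, Subtype.ext (hall i)⟩)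
  choose x hx_eq hx_lt using fun Y => exists_sum_eq_and_sum_lt (Y := Y) (v := v) fun k M hM =>
    hM.lt_sum_of_irreducible (hcover Y)
  exact exists_forall_smul_mem_psi hx_eq hx_lt
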